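/- (Consistency-around-a-face-centered-cube for the pair (A3_{(0)}, C3_{(1;0;0)}).) There exists a nonzero polynomial p in twelve variables with complex coefficients such that: for all nonzero α1,α2,β1,β2,γ1,γ2 ∈ ℂ and all x, xa, xb, xc, zn, zw ∈ ℂ with p(α1,α2,β1,β2,γ1,γ2,x,xa,xb,xc,zn,zw) ≠ 0, there exist xd, y, ya, yb, yc, yd, ze, zs ∈ ℂ satisfying all fourteen equations of the CAFCC system for the pair (A, C) := (A3_{(0)}, C3_{(1;0;0)}) with parameters (α1,α2),(β1,β2),(γ1,γ2). In other words, the overdetermined system of fourteen face-centered quad equations on the face-centered cube is consistent: generic initial data x, xa, xb, xc, zn, zw admits a completion solving all fourteen equations. -/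

import Mathlib

noncomputable section

open Matrix Complex

/-- The type-A face-centered quad polynomial `A3_{(δ)}`. -/
noncomputable def A3 (d x xa xb xc xd a1 a2 b1 b2 : ℂ) : ℂ :=
  d/4*(a1/a2-a2/a1)*(b1/b2-b2/b1)*(b1*b2/(a1*a2)-a1*a2/(b1*b2))*x
  + ((b1/b2-b2/b1)*(xa*xb-xc*xd) + (a1/a2-a2/a1)*(xa*xc-xb*xd)
      - (a1*a2/(b1*b2)-b1*b2/(a1*a2))*(xa*xd-xb*xc))*x
  + (a2/b1-b1/a2)*(xa*x^2-xb*xc*xd) - (a2/b2-b2/a2)*(xb*x^2-xa*xc*xd)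
  - (a1/b1-b1/a1)*(xc*x^2-xa*xb*xd) + (a1/b2-b2/a1)*(xd*x^2-xa*xb*xc)
  + d/4*((a1/b1-b1/a1)*(a2/b2-b2/a2)*((a1/b2-b2/a1)*xa+(a2/b1-b1/a2)*xd)
      - (a1/b2-b2/a1)*(a2/b1-b1/a2)*((a1/b1-b1/a1)*xb+(a2/b2-b2/a2)*xc))

/-- The type-C face-centered quad polynomial `C3_{(δ1;δ2;δ3)}`. -/
noncomputable def C3 (d1 d2 d3 x xa xb xc xd a1 a2 b1 b2 : ℂ) : ℂ :=
  (a2*(b1*xd-b2*xc) - d3*(a2^2*(b1*xb-b2*xa)+b1*b2*(b1*xa-b2*xb))/a1)*x^2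
  + a2*xa*xb*(b2*xd-b1*xc)
  + d1*a1*(b1*xb-b2*xa+a2^2*(xa/b2-xb/b1))
  + (a2^2*(xb*xc-xa*xd) + b1*b2*(xa*xc-xb*xd)
      + a2*(b2/b1-b1/b2)*(d1*a1 - d3*(b1*b2/a1)*xa*xb + d2*(b1*b2/a1)*xc*xd))*x
  + d2*((a2^2-b1^2)*(a2^2-b2^2)/(2*a2*b1*b2)*(b2*xd-b1*xc)
      + (xc*xd/a1)*(b1*b2*(b1*xb-b2*xa)+a2^2*(b1*xa-b2*xb)))

/-- The permutation matrix `P`. -/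
noncomputable def Pm : Matrix (Fin 2) (Fin 2) ℂ := !![0, 1; 1, 0]

/-- The matrix `M(u,v)` from the type-A Lax matrix of `A3_{(0)}`. -/
noncomputable def Mm (p1 p2 q1 q2 u v : ℂ) : Matrix (Fin 2) (Fin 2) ℂ :=
  (4:ℂ) • !![q1/p1-p1/q1, (p2/q1-q1/p2)*u+(q2/p2-p2/q2)*v; 0, q2/p1-p1/q2]

/-- The unnormalized type-A Lax matrix of `A3_{(0)}`. -/
noncomputable def NA3 (x xa xb p1 p2 q1 q2 : ℂ) : Matrix (Fin 2) (Fin 2) ℂ :=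
  x^2 • Mm p1 p2 q1 q2 xa xb
  + x • ((4:ℂ) • !![(p1/p2-p2/p1)*xa+(p1*p2/(q1*q2)-q1*q2/(p1*p2))*xb, (q1/q2-q2/q1)*xa*xb;
        q1/q2-q2/q1, (p1*p2/(q1*q2)-q1*q2/(p1*p2))*xa+(p1/p2-p2/p1)*xb])
  + (xa*xb) • (Pm * Mm p1 p2 q1 q2 (1/xa) (1/xb) * Pm)

/-- The normalization factor `D_LA` for the type-A Lax matrix of `A3_{(0)}`. -/
noncomputable def DA3 (x xa xb p1 p2 q1 q2 : ℂ) : ℂ :=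
  4*Complex.I*(p1^2-q1^2)*(q1*xa-p2*x)*(q2*x-p2*xb)/(p1*p2*q1*q2)

/-- The (normalized) type-A Lax matrix of `A3_{(0)}`. -/
noncomputable def laxA3 (x xa xb p1 p2 q1 q2 : ℂ) : Matrix (Fin 2) (Fin 2) ℂ :=
  (DA3 x xa xb p1 p2 q1 q2)⁻¹ • NA3 x xa xb p1 p2 q1 q2

/-- The type-C Lax matrix of `C3_{(δ1;δ2;δ3)}`. -/
noncomputable def laxC3 (d1 d2 d3 x xb xd p1 p2 q1 q2 : ℂ) : Matrix (Fin 2) (Fin 2) ℂ :=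
  p2 • (x^2 • (!![-q2, q1*xd; 0, 0]
        + d1 • ((2*d3*q1*q2/p1) • !![0, (q2/p2-p2/q2)*xb; 0, q1/p2-p2/q1]))
    + x • (!![p2*xb, -((q1*q2/p2)*xb*xd); -(q1*q2/p2), p2*xd]
        + d1 • (((2*q1*q2/p1)*(q2/q1-q1/q2)) • !![d2*xd, p1^2/(2*q1*q2); 0, d3*xb]))
    + (!![0, 0; q1*xb, -(q2*xb*xd)]
        + d1 • !![d2*q1*(q1/p2-p2/q1)*(p2/q2-q2/p2+2*(q2/p1)*xb*xd),
                   (q1/p2-p2/q1)*(p1*xb-d2*(p2/q2-q2/p2)*q2*xd);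
                   2*d2*(q2/p2-p2/q2)*(q1*q2/p1)*xd, p1*(q2/p2-p2/q2)]))

/-!
Each of the fourteen equations equates two products of legs, a leg involving the central value and
one of its neighbours. The face-centered cube is cut along the axis through `x` and `y` into a west
and an east half, and each half into two octahedra, with vertices `x, y, zn, z, xa, ya` (type A) and
`x, y, z, zs, xc, yc` (type C) in the west half, where `z = zw`. On an octahedron, eliminating a
value between the equations at two adjacent vertices shows that these two imply the other four. So
it is enough to solve the equations at `x` and `y` in each octahedron, and each of these is affine
in the unknown that it determines.

The equations at the corners other than `x` and `y` are then equations of the octahedra. Those at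
`x`, `y` and the face centres arise by combining the octahedra meeting there: these share legs,
which cancel wherever they do not vanish. The solution is a regular function of the initial data
near a point where all denominators and cancelled legs are nonzero, so this nondegeneracy is an open
condition, and one explicit point shows that it is not empty.
-/

section CommRing

variable {R : Type*} [CommRing R]

/-- The type-A face-centered quad polynomial `A3_{(0)}`, multiplied by the product `i * j * k * l`
of its parameters `(i, j), (k, l)` to clear denominators. -/
def quadA (x xa xb xc xd i j k l : R) : R :=
  ((k ^ 2 - l ^ 2) * i * j * (xa * xb - xc * xd) + (i ^ 2 - j ^ 2) * k * l * (xa * xc - xb * xd)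
    - (i ^ 2 * j ^ 2 - k ^ 2 * l ^ 2) * (xa * xd - xb * xc)) * x
  + (j ^ 2 - k ^ 2) * i * l * (xa * x ^ 2 - xb * xc * xd)
  - (j ^ 2 - l ^ 2) * i * k * (xb * x ^ 2 - xa * xc * xd)
  - (i ^ 2 - k ^ 2) * j * l * (xc * x ^ 2 - xa * xb * xd)
  + (i ^ 2 - l ^ 2) * j * k * (xd * x ^ 2 - xa * xb * xc)

/-- The coefficient of `xd` in `quadA x xa xb xc xd i j k l`. -/
def quadACoeff (x xa xb xc i j k l : R) : R :=
  -((k ^ 2 - l ^ 2) * i * j * xc + (i ^ 2 - j ^ 2) * k * l * xb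
    + (i ^ 2 * j ^ 2 - k ^ 2 * l ^ 2) * xa) * x
  - (j ^ 2 - k ^ 2) * i * l * xb * xc + (j ^ 2 - l ^ 2) * i * k * xa * xc
  + (i ^ 2 - k ^ 2) * j * l * xa * xb + (i ^ 2 - l ^ 2) * j * k * x ^ 2

/-- The type-C face-centered quad polynomial `C3_{(1;0;0)}`, multiplied by `b1 * b2` to clear
denominators. -/
def quadC (x xa xb xc xd a1 a2 b1 b2 : R) : R :=
  b1 * b2 * a2 * (b1 * xd - b2 * xc) * x ^ 2 + b1 * b2 * a2 * xa * xb * (b2 * xd - b1 * xc)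
  + a1 * (b1 ^ 2 * b2 * xb - b1 * b2 ^ 2 * xa + a2 ^ 2 * (b1 * xa - b2 * xb))
  + (b1 * b2 * (a2 ^ 2 * (xb * xc - xa * xd) + b1 * b2 * (xa * xc - xb * xd))
    + a2 * (b2 ^ 2 - b1 ^ 2) * a1) * x

/-- The coefficient of `xd` in `quadC x xa xb xc xd a1 a2 b1 b2`. -/
def quadCCoeff (x xa xb a2 b1 b2 : R) : R :=
  b1 * b2 * (b1 * x - a2 * xa) * (a2 * x - b2 * xb)

/-- The discriminant of an edge joining the values `x` and `y`, with parameters `p` and `q`: on its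
zero locus the legs of the two equations along this edge vanish. -/
def edgeFactor (p q x y : R) : R :=
  (p * x - q * y) * (q * x - p * y)

lemma edgeFactor_comm (p q x y : R) : edgeFactor p q x y = edgeFactor q p x y :=
  mul_comm _ _

lemma edgeFactor_symm (p q x y : R) : edgeFactor p q y x = edgeFactor p q x y := by
  unfold edgeFactor; ring

lemma quadA_swap (x xa xb xc xd i j k l : R) :
    quadA x xb xa xd xc i j l k = -quadA x xa xb xc xd i j k l := by
  unfold quadA; ring

lemma quadA_rotate (x xa xb xc xd i j k l : R) :
    quadA x xb xd xa xc k l j i = quadA x xa xb xc xd i j k l := by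
  unfold quadA; ring

lemma quadA_complement (x xa xb xc xd i j k l : R) :
    quadA x xa xc xb xd l k j i = -quadA x xa xb xc xd i j k l := by
  unfold quadA; ring

lemma quadC_swap (x xa xb xc xd a1 a2 b1 b2 : R) :
    quadC x xb xa xd xc a1 a2 b2 b1 = -quadC x xa xb xc xd a1 a2 b1 b2 := by
  unfold quadC; ring

lemma quadA_eq_add (x xa xb xc xd i j k l : R) :
    quadA x xa xb xc xd i j k l =
      quadA x xa xb xc 0 i j k l + quadACoeff x xa xb xc i j k l * xd := by
  unfold quadA quadACoeff; ring

lemma quadC_eq_add (x xa xb xc xd a1 a2 b1 b2 : R) :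
    quadC x xa xb xc xd a1 a2 b1 b2 =
      quadC x xa xb xc 0 a1 a2 b1 b2 + quadCCoeff x xa xb a2 b1 b2 * xd := by
  unfold quadC quadCCoeff; ring

-- The three-leg forms: each leg involves `x` and a single neighbour.
lemma mul_quadA (x xa xb xc xd i j k l : R) :
    x * quadA x xa xb xc xd i j k l =
      (j * x - k * xa) * (i * x - l * xd) * ((l * x - j * xb) * (k * x - i * xc))
        - (k * x - j * xa) * (l * x - i * xd) * ((j * x - l * xb) * (i * x - k * xc)) := by
  unfold quadA; ring

lemma mul_quadC (x xa xb xc xd a1 a2 b1 b2 : R) :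
    x * quadC x xa xb xc xd a1 a2 b1 b2 =
      b1 * (b1 * x - a2 * xa) * (a2 * x - b2 * xb) * (x * xd * b2 - a1)
        - b2 * (a2 * x - b1 * xa) * (b2 * x - a2 * xb) * (x * xc * b1 - a1) := by
  unfold quadC; ring

lemma quadA_elim_v23 (p1 p2 p3 p4 v12 v13 v14 v23 v24 v34 : R) :
    (p1 ^ 2 - p4 ^ 2) * edgeFactor p2 p3 v12 v13 * quadA v14 v12 v13 v24 v34 p1 p4 p2 p3 =
      quadACoeff v13 v14 v12 v34 p1 p3 p4 p2 * quadA v12 v13 v14 v23 v24 p1 p2 p3 p4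
        - quadACoeff v12 v14 v13 v24 p1 p2 p4 p3 * quadA v13 v12 v14 v23 v34 p1 p3 p2 p4 := by
  unfold quadA quadACoeff edgeFactor; ring

lemma quadC_elim_Z3 (a p1 p2 p3 X1 X2 X3 Z1 Z2 Z3 : R) :
    (p2 * X1 - p1 * X2) * p3 * quadC X3 X1 X2 Z2 Z1 a p3 p1 p2 =
      -((p3 * X1 - p1 * X3) * p2 * quadC X2 X1 X3 Z3 Z1 a p2 p1 p3)
        - (p3 * X2 - p2 * X3) * p1 * quadC X1 X2 X3 Z3 Z2 a p1 p2 p3 := by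
  unfold quadC; ring

-- A difference of values of `quadC` at `1` and `0` is a coefficient, `quadC` being multi-affine.
lemma quadC_elim_X3 (a p1 p2 p3 X1 X2 X3 Z1 Z2 Z3 : R) :
    p3 ^ 2 * edgeFactor p1 p2 X1 X2 * quadC Z3 Z1 Z2 X2 X1 a p3 p1 p2 =
      (quadC X1 1 X2 Z2 Z3 a p1 p3 p2 - quadC X1 0 X2 Z2 Z3 a p1 p3 p2)
          * quadC X2 X1 X3 Z3 Z1 a p2 p1 p3
        - (quadC X2 1 X1 Z1 Z3 a p2 p3 p1 - quadC X2 0 X1 Z1 Z3 a p2 p3 p1)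
          * quadC X1 X2 X3 Z3 Z2 a p1 p2 p3 := by
  unfold quadC edgeFactor; ring

/-- The consistent octahedron of type-A equations. Its vertices carry the values `vij`, labelled by
the pairs from four parameters, and two vertices are adjacent when their labels share an index; the
equation `atij` is centred at `vij` and involves its four neighbours. -/
structure OctahedronA (p1 p2 p3 p4 v12 v13 v14 v23 v24 v34 : R) : Prop where
  at12 : quadA v12 v13 v14 v23 v24 p1 p2 p3 p4 = 0
  at13 : quadA v13 v12 v14 v23 v34 p1 p3 p2 p4 = 0
  at14 : quadA v14 v12 v13 v24 v34 p1 p4 p2 p3 = 0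
  at23 : quadA v23 v12 v24 v13 v34 p2 p3 p1 p4 = 0
  at24 : quadA v24 v12 v23 v14 v34 p2 p4 p1 p3 = 0
  at34 : quadA v34 v13 v23 v14 v24 p3 p4 p1 p2 = 0

/-- The consistent octahedron of type-C equations. The values `Xi` and `Zi` sit at antipodal
vertices, and the equation `atXi` or `atZi` is centred at that vertex and involves its four
neighbours. -/
structure OctahedronC (a p1 p2 p3 X1 X2 X3 Z1 Z2 Z3 : R) : Prop where
  atX1 : quadC X1 X2 X3 Z3 Z2 a p1 p2 p3 = 0
  atX2 : quadC X2 X1 X3 Z3 Z1 a p2 p1 p3 = 0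
  atX3 : quadC X3 X1 X2 Z2 Z1 a p3 p1 p2 = 0
  atZ1 : quadC Z1 Z2 Z3 X3 X2 a p1 p2 p3 = 0
  atZ2 : quadC Z2 Z1 Z3 X3 X1 a p2 p1 p3 = 0
  atZ3 : quadC Z3 Z1 Z2 X2 X1 a p3 p1 p2 = 0

/-- Nondegeneracy of the data shared by both halves of the face-centered cube: the corners `x` and
`y`, the face centres `zn` and `zs`, and the parameters attached to them. -/
structure AxisNondegenerate (a1 a2 g1 g2 x y zn zs : R) : Prop where
  g1_ne : g1 ≠ 0
  g2_ne : g2 ≠ 0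
  x_ne : x ≠ 0
  y_ne : y ≠ 0
  zn_ne : zn ≠ 0
  zs_ne : zs ≠ 0
  edge_xy : edgeFactor g1 g2 x y ≠ 0
  edge_xzn : edgeFactor g1 a2 x zn ≠ 0
  edge_yzn : edgeFactor g2 a2 y zn ≠ 0
  leg_zs : zs * x * g1 - a1 ≠ 0

/-- Nondegeneracy of one half of the face-centered cube, with face centre `z` and parameter `b`. -/
structure SideNondegenerate (a2 g1 g2 x y b z : R) : Prop where
  b_ne : b ≠ 0
  z_ne : z ≠ 0
  sq_ne_a2 : b ^ 2 ≠ a2 ^ 2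
  sq_ne_g1 : b ^ 2 ≠ g1 ^ 2
  sq_ne_g2 : b ^ 2 ≠ g2 ^ 2
  edge_xz : edgeFactor b g2 x z ≠ 0
  edge_yz : edgeFactor b g1 y z ≠ 0

/-- The two octahedra that make up the west (`b = b1`, `z = zw`) or the east (`b = b2`, `z = ze`)
half of the face-centered cube, where `xa, ya, xc, yc` are the four corners of that half other than
`x` and `y`. -/
structure HalfCube (a1 a2 g1 g2 x y zn zs b z xa ya xc yc : R) : Prop where
  octA : OctahedronA b g1 g2 a2 x y zn z xa ya
  octC : OctahedronC a1 g2 g1 b x y z yc xc zs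

namespace HalfCube

variable {a1 a2 g1 g2 x y zn zs b b1 b2 z zw ze xa xb xc xd ya yb yc yd : R}

theorem quadA_xa (h : HalfCube a1 a2 g1 g2 x y zn zs b z xa ya xc yc) :
    quadA xa z ya x zn b g2 a2 g1 = 0 := by
  rw [quadA_rotate, h.octA.at24]

theorem quadA_ya (h : HalfCube a1 a2 g1 g2 x y zn zs b z xa ya xc yc) :
    quadA ya z xa y zn b g1 a2 g2 = 0 := by
  rw [quadA_rotate, h.octA.at34]

theorem quadC_xc (h : HalfCube a1 a2 g1 g2 x y zn zs b z xa ya xc yc) :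
    quadC xc yc zs z x a1 g1 g2 b = 0 :=
  h.octC.atZ2

theorem quadC_xc_swap (h : HalfCube a1 a2 g1 g2 x y zn zs b z xa ya xc yc) :
    quadC xc zs yc x z a1 g1 b g2 = 0 := by
  rw [quadC_swap, h.quadC_xc, neg_zero]

theorem quadC_yc (h : HalfCube a1 a2 g1 g2 x y zn zs b z xa ya xc yc) :
    quadC yc xc zs z y a1 g2 g1 b = 0 :=
  h.octC.atZ1

end HalfCube

variable [IsDomain R]

lemma cross_mul_eq_cross_mul {u v l₁ r₁ l₂ r₂ : R} (hu : u ≠ 0)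
    (h₁ : u * l₁ = v * r₁) (h₂ : u * l₂ = v * r₂) : l₁ * r₂ = l₂ * r₁ := by
  refine mul_left_cancel₀ hu ?_
  linear_combination r₂ * h₁ - r₁ * h₂

lemma quadC_of_quadA_of_quadC {x xa xb xc xd u v a1 a2 b1 b2 c : R} (hx : x ≠ 0)
    (hu : b2 * x - c * u ≠ 0) (hv : c * x - b1 * v ≠ 0)
    (hA : quadA x u xb v xa b1 b2 c a2 = 0) (hC : quadC x u v xd xc a1 c b2 b1 = 0) :
    quadC x xa xb xc xd a1 a2 b1 b2 = 0 := by
  have hA' := mul_quadA x u xb v xa b1 b2 c a2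
  have hC' := mul_quadC x u v xd xc a1 c b2 b1
  have key := cross_mul_eq_cross_mul (mul_ne_zero hu hv)
    (v := (c * x - b2 * u) * (b1 * x - c * v))
    (l₁ := (b1 * x - a2 * xa) * (a2 * x - b2 * xb))
    (r₁ := (a2 * x - b1 * xa) * (b2 * x - a2 * xb))
    (l₂ := b2 * (x * xc * b1 - a1)) (r₂ := b1 * (x * xd * b2 - a1))
    (by linear_combination x * hA - hA') (by linear_combination x * hC - hC')
  refine mul_left_cancel₀ hx ?_
  rw [mul_quadC]
  linear_combination key

lemma quadC_of_quadC_of_quadC {x xa xb xc xd u v a1 a2 b1 b2 c : R} (hx : x ≠ 0) (hc : c ≠ 0)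
    (hu : c * x - a2 * u ≠ 0)
    (h₁ : quadC x xa u xc v a1 a2 b1 c = 0) (h₂ : quadC x xb u xd v a1 a2 b2 c = 0) :
    quadC x xa xb xc xd a1 a2 b1 b2 = 0 := by
  have h₁' := mul_quadC x xa u xc v a1 a2 b1 c
  have h₂' := mul_quadC x xb u xd v a1 a2 b2 c
  have key := cross_mul_eq_cross_mul (mul_ne_zero hc hu)
    (v := (a2 * x - c * u) * (x * v * c - a1))
    (l₁ := (a2 * x - b1 * xa) * (x * xc * b1 - a1)) (r₁ := b1 * (b1 * x - a2 * xa))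
    (l₂ := (a2 * x - b2 * xb) * (x * xd * b2 - a1)) (r₂ := b2 * (b2 * x - a2 * xb))
    (by linear_combination h₁' - x * h₁) (by linear_combination h₂' - x * h₂)
  refine mul_left_cancel₀ hx ?_
  rw [mul_quadC]
  linear_combination -key

lemma quadA_of_quadA_of_quadA {x xa xb xc xd u v i j b1 b2 c : R} (hx : x ≠ 0)
    (hu : c * x - i * u ≠ 0) (hv : j * x - c * v ≠ 0)
    (h₁ : quadA x u v xc xa b1 c i j = 0) (h₂ : quadA x u v xd xb b2 c i j = 0) :
    quadA x xa xb xc xd i j b1 b2 = 0 := by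
  have h₁' := mul_quadA x u v xc xa b1 c i j
  have h₂' := mul_quadA x u v xd xb b2 c i j
  have key := cross_mul_eq_cross_mul (mul_ne_zero hu hv)
    (v := (i * x - c * u) * (c * x - j * v))
    (l₁ := (b1 * x - j * xa) * (i * x - b1 * xc)) (r₁ := (j * x - b1 * xa) * (b1 * x - i * xc))
    (l₂ := (b2 * x - j * xb) * (i * x - b2 * xd)) (r₂ := (j * x - b2 * xb) * (b2 * x - i * xd))
    (by linear_combination x * h₁ - h₁') (by linear_combination x * h₂ - h₂')
  refine mul_left_cancel₀ hx ?_
  rw [mul_quadA]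
  linear_combination -key

lemma quadA_of_quadC_of_quadC {x xa xb xc xd u v a i j b1 b2 : R} (hx : x ≠ 0) (hj : j ≠ 0)
    (hv : x * v * i - a ≠ 0)
    (h₁ : quadC x xa xc u v a b1 j i = 0) (h₂ : quadC x xb xd u v a b2 j i = 0) :
    quadA x xa xb xc xd i j b1 b2 = 0 := by
  have h₁' := mul_quadC x xa xc u v a b1 j i
  have h₂' := mul_quadC x xb xd u v a b2 j i
  have key := cross_mul_eq_cross_mul (mul_ne_zero hj hv) (v := i * (x * u * j - a))
    (l₁ := (j * x - b1 * xa) * (b1 * x - i * xc)) (r₁ := (b1 * x - j * xa) * (i * x - b1 * xc))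
    (l₂ := (j * x - b2 * xb) * (b2 * x - i * xd)) (r₂ := (b2 * x - j * xb) * (i * x - b2 * xd))
    (by linear_combination x * h₁ - h₁') (by linear_combination x * h₂ - h₂')
  refine mul_left_cancel₀ hx ?_
  rw [mul_quadA]
  linear_combination key

lemma quadA_at14_of_at12_of_at13 {p1 p2 p3 p4 v12 v13 v14 v23 v24 v34 : R}
    (hp : p1 ^ 2 ≠ p4 ^ 2) (hv : edgeFactor p2 p3 v12 v13 ≠ 0)
    (h12 : quadA v12 v13 v14 v23 v24 p1 p2 p3 p4 = 0)
    (h13 : quadA v13 v12 v14 v23 v34 p1 p3 p2 p4 = 0) :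
    quadA v14 v12 v13 v24 v34 p1 p4 p2 p3 = 0 := by
  have h := quadA_elim_v23 p1 p2 p3 p4 v12 v13 v14 v23 v24 v34
  rw [h12, h13, mul_zero, mul_zero, sub_zero] at h
  exact (mul_eq_zero.mp h).resolve_left (mul_ne_zero (sub_ne_zero.mpr hp) hv)

-- Reversing the order of the parameters exchanges the roles of the antipodes `v14` and `v23`.
lemma quadA_at23_of_at12_of_at13 {p1 p2 p3 p4 v12 v13 v14 v23 v24 v34 : R}
    (hp : p1 ^ 2 ≠ p4 ^ 2) (hv : edgeFactor p2 p3 v12 v13 ≠ 0)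
    (h12 : quadA v12 v13 v14 v23 v24 p1 p2 p3 p4 = 0)
    (h13 : quadA v13 v12 v14 v23 v34 p1 p3 p2 p4 = 0) :
    quadA v23 v12 v24 v13 v34 p2 p3 p1 p4 = 0 := by
  rw [← neg_eq_zero, ← quadA_complement] at h12 h13 ⊢
  rw [edgeFactor_comm] at hv
  exact quadA_at14_of_at12_of_at13 hp.symm hv h12 h13

theorem OctahedronA.of_at12_of_at13 {p1 p2 p3 p4 v12 v13 v14 v23 v24 v34 : R}
    (hp2 : p1 ^ 2 ≠ p2 ^ 2) (hp3 : p1 ^ 2 ≠ p3 ^ 2) (hp4 : p1 ^ 2 ≠ p4 ^ 2)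
    (hv23 : edgeFactor p2 p3 v12 v13 ≠ 0) (hv24 : edgeFactor p2 p4 v12 v14 ≠ 0)
    (hv34 : edgeFactor p3 p4 v13 v14 ≠ 0)
    (at12 : quadA v12 v13 v14 v23 v24 p1 p2 p3 p4 = 0)
    (at13 : quadA v13 v12 v14 v23 v34 p1 p3 p2 p4 = 0) :
    OctahedronA p1 p2 p3 p4 v12 v13 v14 v23 v24 v34 := by
  have at14 := quadA_at14_of_at12_of_at13 hp4 hv23 at12 at13
  have at12' : quadA v12 v14 v13 v24 v23 p1 p2 p4 p3 = 0 := by rw [quadA_swap, at12, neg_zero]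
  have at13' : quadA v13 v14 v12 v34 v23 p1 p3 p4 p2 = 0 := by rw [quadA_swap, at13, neg_zero]
  have at14' : quadA v14 v13 v12 v34 v24 p1 p4 p3 p2 = 0 := by rw [quadA_swap, at14, neg_zero]
  exact ⟨at12, at13, at14, quadA_at23_of_at12_of_at13 hp4 hv23 at12 at13,
    quadA_at23_of_at12_of_at13 hp3 hv24 at12' at14,
    quadA_at23_of_at12_of_at13 hp2 hv34 at13' at14'⟩

lemma quadC_atX3_of_atX1_of_atX2 {a p1 p2 p3 X1 X2 X3 Z1 Z2 Z3 : R} (hp : p3 ≠ 0)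
    (hX : edgeFactor p1 p2 X1 X2 ≠ 0)
    (hX1 : quadC X1 X2 X3 Z3 Z2 a p1 p2 p3 = 0) (hX2 : quadC X2 X1 X3 Z3 Z1 a p2 p1 p3 = 0) :
    quadC X3 X1 X2 Z2 Z1 a p3 p1 p2 = 0 := by
  have h := quadC_elim_Z3 a p1 p2 p3 X1 X2 X3 Z1 Z2 Z3
  rw [hX1, hX2, mul_zero, mul_zero, neg_zero, sub_zero] at h
  exact (mul_eq_zero.mp h).resolve_left (mul_ne_zero (right_ne_zero_of_mul hX) hp)

lemma quadC_atZ3_of_atX1_of_atX2 {a p1 p2 p3 X1 X2 X3 Z1 Z2 Z3 : R} (hp : p3 ≠ 0)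
    (hX : edgeFactor p1 p2 X1 X2 ≠ 0)
    (hX1 : quadC X1 X2 X3 Z3 Z2 a p1 p2 p3 = 0) (hX2 : quadC X2 X1 X3 Z3 Z1 a p2 p1 p3 = 0) :
    quadC Z3 Z1 Z2 X2 X1 a p3 p1 p2 = 0 := by
  have h := quadC_elim_X3 a p1 p2 p3 X1 X2 X3 Z1 Z2 Z3
  rw [hX1, hX2, mul_zero, mul_zero, sub_zero] at h
  exact (mul_eq_zero.mp h).resolve_left (mul_ne_zero (pow_ne_zero 2 hp) hX)

theorem OctahedronC.of_atX1_of_atX2 {a p1 p2 p3 X1 X2 X3 Z1 Z2 Z3 : R}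
    (hp1 : p1 ≠ 0) (hp2 : p2 ≠ 0) (hp3 : p3 ≠ 0)
    (hX12 : edgeFactor p1 p2 X1 X2 ≠ 0) (hX13 : edgeFactor p1 p3 X1 X3 ≠ 0)
    (hX23 : edgeFactor p2 p3 X2 X3 ≠ 0)
    (atX1 : quadC X1 X2 X3 Z3 Z2 a p1 p2 p3 = 0) (atX2 : quadC X2 X1 X3 Z3 Z1 a p2 p1 p3 = 0) :
    OctahedronC a p1 p2 p3 X1 X2 X3 Z1 Z2 Z3 := by
  have atX3 := quadC_atX3_of_atX1_of_atX2 hp3 hX12 atX1 atX2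
  have atX1' : quadC X1 X3 X2 Z2 Z3 a p1 p3 p2 = 0 := by rw [quadC_swap, atX1, neg_zero]
  have atX2' : quadC X2 X3 X1 Z1 Z3 a p2 p3 p1 = 0 := by rw [quadC_swap, atX2, neg_zero]
  have atX3' : quadC X3 X2 X1 Z1 Z2 a p3 p2 p1 = 0 := by rw [quadC_swap, atX3, neg_zero]
  exact ⟨atX1, atX2, atX3, quadC_atZ3_of_atX1_of_atX2 hp1 hX23 atX2' atX3',
    quadC_atZ3_of_atX1_of_atX2 hp2 hX13 atX1' atX3, quadC_atZ3_of_atX1_of_atX2 hp3 hX12 atX1 atX2⟩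

namespace HalfCube

variable {a1 a2 g1 g2 x y zn zs b b1 b2 z zw ze xa xb xc xd ya yb yc yd : R}

theorem of_x_of_y (axis : AxisNondegenerate a1 a2 g1 g2 x y zn zs)
    (side : SideNondegenerate a2 g1 g2 x y b z)
    (hxA : quadA x y zn z xa b g1 g2 a2 = 0) (hyA : quadA y x zn z ya b g2 g1 a2 = 0)
    (hxC : quadC x y z zs xc a1 g2 g1 b = 0) (hyC : quadC y x z zs yc a1 g1 g2 b = 0) :
    HalfCube a1 a2 g1 g2 x y zn zs b z xa ya xc yc where
  octA := .of_at12_of_at13 side.sq_ne_g1 side.sq_ne_g2 side.sq_ne_a2 axis.edge_xy axis.edge_xzn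
    axis.edge_yzn hxA hyA
  octC := .of_atX1_of_atX2 axis.g2_ne axis.g1_ne side.b_ne
    (edgeFactor_comm g1 g2 x y ▸ axis.edge_xy) (edgeFactor_comm b g2 x z ▸ side.edge_xz)
    (edgeFactor_comm b g1 y z ▸ side.edge_yz) hxC hyC

theorem quadC_z (side : SideNondegenerate a2 g1 g2 x y b z)
    (h : HalfCube a1 a2 g1 g2 x y zn zs b z xa ya xc yc) :
    quadC z ya xa yc xc a1 a2 g1 g2 = 0 :=
  quadC_of_quadA_of_quadC side.z_ne
    (right_ne_zero_of_mul (edgeFactor_symm b g2 x z ▸ side.edge_xz))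
    (left_ne_zero_of_mul (edgeFactor_symm b g1 y z ▸ side.edge_yz)) h.octA.at23 h.octC.atX3

theorem quadC_x_half (axis : AxisNondegenerate a1 a2 g1 g2 x y zn zs)
    (side : SideNondegenerate a2 g1 g2 x y b z)
    (h : HalfCube a1 a2 g1 g2 x y zn zs b z xa ya xc yc) :
    quadC x xa zn xc zs a1 a2 b g1 = 0 :=
  quadC_of_quadA_of_quadC axis.x_ne (left_ne_zero_of_mul axis.edge_xy)
    (right_ne_zero_of_mul side.edge_xz) h.octA.at12 h.octC.atX1

theorem quadC_y_half (axis : AxisNondegenerate a1 a2 g1 g2 x y zn zs)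
    (side : SideNondegenerate a2 g1 g2 x y b z)
    (h : HalfCube a1 a2 g1 g2 x y zn zs b z xa ya xc yc) :
    quadC y ya zn yc zs a1 a2 b g2 = 0 :=
  quadC_of_quadA_of_quadC axis.y_ne
    (right_ne_zero_of_mul (edgeFactor_symm g1 g2 x y ▸ axis.edge_xy))
    (right_ne_zero_of_mul side.edge_yz) h.octA.at13 h.octC.atX2

theorem quadC_x (axis : AxisNondegenerate a1 a2 g1 g2 x y zn zs)
    (sideW : SideNondegenerate a2 g1 g2 x y b1 zw) (sideE : SideNondegenerate a2 g1 g2 x y b2 ze)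
    (west : HalfCube a1 a2 g1 g2 x y zn zs b1 zw xa ya xc yc)
    (east : HalfCube a1 a2 g1 g2 x y zn zs b2 ze xb yb xd yd) :
    quadC x xa xb xc xd a1 a2 b1 b2 = 0 :=
  quadC_of_quadC_of_quadC axis.x_ne axis.g1_ne (left_ne_zero_of_mul axis.edge_xzn)
    (west.quadC_x_half axis sideW) (east.quadC_x_half axis sideE)

theorem quadC_y (axis : AxisNondegenerate a1 a2 g1 g2 x y zn zs)
    (sideW : SideNondegenerate a2 g1 g2 x y b1 zw) (sideE : SideNondegenerate a2 g1 g2 x y b2 ze)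
    (west : HalfCube a1 a2 g1 g2 x y zn zs b1 zw xa ya xc yc)
    (east : HalfCube a1 a2 g1 g2 x y zn zs b2 ze xb yb xd yd) :
    quadC y ya yb yc yd a1 a2 b1 b2 = 0 :=
  quadC_of_quadC_of_quadC axis.y_ne axis.g2_ne (left_ne_zero_of_mul axis.edge_yzn)
    (west.quadC_y_half axis sideW) (east.quadC_y_half axis sideE)

theorem quadA_zn (axis : AxisNondegenerate a1 a2 g1 g2 x y zn zs)
    (west : HalfCube a1 a2 g1 g2 x y zn zs b1 zw xa ya xc yc)
    (east : HalfCube a1 a2 g1 g2 x y zn zs b2 ze xb yb xd yd) :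
    quadA zn ya yb xa xb g1 g2 b1 b2 = 0 :=
  quadA_of_quadA_of_quadA axis.zn_ne
    (right_ne_zero_of_mul (edgeFactor_symm g1 a2 x zn ▸ axis.edge_xzn))
    (left_ne_zero_of_mul (edgeFactor_symm g2 a2 y zn ▸ axis.edge_yzn))
    west.octA.at14 east.octA.at14

theorem quadA_zs (axis : AxisNondegenerate a1 a2 g1 g2 x y zn zs)
    (west : HalfCube a1 a2 g1 g2 x y zn zs b1 zw xa ya xc yc)
    (east : HalfCube a1 a2 g1 g2 x y zn zs b2 ze xb yb xd yd) :
    quadA zs yc yd xc xd g1 g2 b1 b2 = 0 :=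
  quadA_of_quadC_of_quadC axis.zs_ne axis.g2_ne axis.leg_zs west.octC.atZ3 east.octC.atZ3

end HalfCube

end CommRing

section Regular

open MvPolynomial

variable {σ K : Type*} [Field K] {v₀ : σ → K} {f g : (σ → K) → K}

/-- The filter of Zariski neighbourhoods of a point of affine space. -/
def zariskiNhds (v₀ : σ → K) : Filter (σ → K) where
  sets := {s | ∃ p : MvPolynomial σ K, eval v₀ p ≠ 0 ∧ ∀ v, eval v p ≠ 0 → v ∈ s}
  univ_sets := ⟨1, by simp⟩
  sets_of_superset := fun ⟨p, hp, hs⟩ hst => ⟨p, hp, fun v hv => hst (hs v hv)⟩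
  inter_sets := fun ⟨p, hp, hs⟩ ⟨q, hq, ht⟩ =>
    ⟨p * q, by simp [hp, hq], fun v hv => by
      rw [map_mul] at hv
      exact ⟨hs v (left_ne_zero_of_mul hv), ht v (right_ne_zero_of_mul hv)⟩⟩

lemma eventually_zariskiNhds {P : (σ → K) → Prop} :
    (∀ᶠ v in zariskiNhds v₀, P v) ↔
      ∃ p : MvPolynomial σ K, eval v₀ p ≠ 0 ∧ ∀ v, eval v p ≠ 0 → P v :=
  Iff.rfl

/-- A function on affine space is regular at `v₀` if it is a quotient of polynomials on a Zariski
neighbourhood of `v₀`, which is taken to be the one where the denominator does not vanish. -/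
@[fun_prop]
def RegularAt (f : (σ → K) → K) (v₀ : σ → K) : Prop :=
  ∃ n d : MvPolynomial σ K, eval v₀ d ≠ 0 ∧ ∀ v, eval v d ≠ 0 → f v = eval v n / eval v d

namespace RegularAt

@[fun_prop]
lemma const (c : K) : RegularAt (fun _ => c) v₀ :=
  ⟨C c, 1, by simp⟩

@[fun_prop]
lemma apply (i : σ) : RegularAt (fun v => v i) v₀ :=
  ⟨X i, 1, by simp⟩

@[fun_prop]
lemma add (hf : RegularAt f v₀) (hg : RegularAt g v₀) : RegularAt (fun v => f v + g v) v₀ := by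
  obtain ⟨n₁, d₁, h₁, hf⟩ := hf
  obtain ⟨n₂, d₂, h₂, hg⟩ := hg
  refine ⟨n₁ * d₂ + d₁ * n₂, d₁ * d₂, by simp [h₁, h₂], fun v hv => ?_⟩
  rw [map_mul] at hv
  simp only [hf v (left_ne_zero_of_mul hv), hg v (right_ne_zero_of_mul hv), map_add, map_mul,
    div_add_div _ _ (left_ne_zero_of_mul hv) (right_ne_zero_of_mul hv)]

@[fun_prop]
lemma mul (hf : RegularAt f v₀) (hg : RegularAt g v₀) : RegularAt (fun v => f v * g v) v₀ := by
  obtain ⟨n₁, d₁, h₁, hf⟩ := hf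
  obtain ⟨n₂, d₂, h₂, hg⟩ := hg
  refine ⟨n₁ * n₂, d₁ * d₂, by simp [h₁, h₂], fun v hv => ?_⟩
  rw [map_mul] at hv
  simp only [hf v (left_ne_zero_of_mul hv), hg v (right_ne_zero_of_mul hv), map_mul,
    div_mul_div_comm]

@[fun_prop]
lemma neg (hf : RegularAt f v₀) : RegularAt (fun v => -f v) v₀ := by
  simpa using (const (-1)).mul hf

@[fun_prop]
lemma sub (hf : RegularAt f v₀) (hg : RegularAt g v₀) : RegularAt (fun v => f v - g v) v₀ := by
  simpa only [sub_eq_add_neg] using hf.add hg.neg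

@[fun_prop]
lemma pow (hf : RegularAt f v₀) (m : ℕ) : RegularAt (fun v => f v ^ m) v₀ := by
  induction m with
  | zero => simpa using const 1
  | succ m ih => simpa only [pow_succ] using ih.mul hf

@[fun_prop]
lemma inv (hf : RegularAt f v₀) (h₀ : f v₀ ≠ 0) : RegularAt (fun v => (f v)⁻¹) v₀ := by
  obtain ⟨n, d, h, hf⟩ := hf
  have hn : eval v₀ n ≠ 0 := fun hn => h₀ (by rw [hf v₀ h, hn, zero_div])
  refine ⟨d * d, d * n, by simp [h, hn], fun v hv => ?_⟩
  rw [map_mul] at hv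
  simp only [hf v (left_ne_zero_of_mul hv), inv_div, map_mul,
    mul_div_mul_left _ _ (left_ne_zero_of_mul hv)]

@[fun_prop]
lemma div (hf : RegularAt f v₀) (hg : RegularAt g v₀) (h₀ : g v₀ ≠ 0) :
    RegularAt (fun v => f v / g v) v₀ := by
  simpa only [div_eq_mul_inv] using hf.mul (hg.inv h₀)

lemma eventually_ne_zero (hf : RegularAt f v₀) (h₀ : f v₀ ≠ 0) :
    ∀ᶠ v in zariskiNhds v₀, f v ≠ 0 := by
  obtain ⟨n, d, h, hf⟩ := hf
  have hn : eval v₀ n ≠ 0 := fun hn => h₀ (by rw [hf v₀ h, hn, zero_div])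
  refine eventually_zariskiNhds.mpr ⟨d * n, by simp [h, hn], fun v hv => ?_⟩
  rw [map_mul] at hv
  rw [hf v (left_ne_zero_of_mul hv)]
  exact div_ne_zero (right_ne_zero_of_mul hv) (left_ne_zero_of_mul hv)

lemma eventually_ne (hf : RegularAt f v₀) (hg : RegularAt g v₀) (h₀ : f v₀ ≠ g v₀) :
    ∀ᶠ v in zariskiNhds v₀, f v ≠ g v := by
  filter_upwards [(hf.sub hg).eventually_ne_zero (sub_ne_zero.mpr h₀)] with v hv
  exact sub_ne_zero.mp hv

end RegularAt

end Regular

section Field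

variable {K : Type*} [Field K]

/-- The value of `xd` solving `quadA x xa xb xc xd i j k l = 0`; it is `0` when the coefficient of
`xd` vanishes. -/
def solveA (x xa xb xc i j k l : K) : K :=
  -quadA x xa xb xc 0 i j k l / quadACoeff x xa xb xc i j k l

/-- The value of `xd` solving `quadC x xa xb xc xd a1 a2 b1 b2 = 0`; it is `0` when the coefficient
of `xd` vanishes. -/
def solveC (x xa xb xc a1 a2 b1 b2 : K) : K :=
  -quadC x xa xb xc 0 a1 a2 b1 b2 / quadCCoeff x xa xb a2 b1 b2

lemma quadA_solveA {x xa xb xc i j k l : K} (h : quadACoeff x xa xb xc i j k l ≠ 0) :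
    quadA x xa xb xc (solveA x xa xb xc i j k l) i j k l = 0 := by
  rw [quadA_eq_add, solveA, mul_div_cancel₀ _ h, add_neg_cancel]

lemma quadC_solveC {x xa xb xc a1 a2 b1 b2 : K} (h : quadCCoeff x xa xb a2 b1 b2 ≠ 0) :
    quadC x xa xb xc (solveC x xa xb xc a1 a2 b1 b2) a1 a2 b1 b2 = 0 := by
  rw [quadC_eq_add, solveC, mul_div_cancel₀ _ h, add_neg_cancel]

namespace RegularAt

variable {σ : Type*} {v₀ : σ → K} {x xa xb xc i j k l a1 a2 b1 b2 : (σ → K) → K}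

protected lemma edgeFactor (hi : RegularAt i v₀) (hj : RegularAt j v₀) (hx : RegularAt x v₀)
    (hxa : RegularAt xa v₀) :
    RegularAt (fun v => edgeFactor (i v) (j v) (x v) (xa v)) v₀ := by
  unfold edgeFactor; fun_prop

@[fun_prop]
protected lemma quadACoeff (hx : RegularAt x v₀) (hxa : RegularAt xa v₀) (hxb : RegularAt xb v₀)
    (hxc : RegularAt xc v₀) (hi : RegularAt i v₀) (hj : RegularAt j v₀) (hk : RegularAt k v₀)
    (hl : RegularAt l v₀) :
    RegularAt (fun v => quadACoeff (x v) (xa v) (xb v) (xc v) (i v) (j v) (k v) (l v)) v₀ := by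
  unfold quadACoeff; fun_prop

protected lemma solveA (hx : RegularAt x v₀) (hxa : RegularAt xa v₀) (hxb : RegularAt xb v₀)
    (hxc : RegularAt xc v₀) (hi : RegularAt i v₀) (hj : RegularAt j v₀) (hk : RegularAt k v₀)
    (hl : RegularAt l v₀)
    (h : quadACoeff (x v₀) (xa v₀) (xb v₀) (xc v₀) (i v₀) (j v₀) (k v₀) (l v₀) ≠ 0) :
    RegularAt (fun v => solveA (x v) (xa v) (xb v) (xc v) (i v) (j v) (k v) (l v)) v₀ := by
  unfold solveA quadA; fun_prop (disch := exact h)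

protected lemma solveC (hx : RegularAt x v₀) (hxa : RegularAt xa v₀) (hxb : RegularAt xb v₀)
    (hxc : RegularAt xc v₀) (ha1 : RegularAt a1 v₀) (ha2 : RegularAt a2 v₀)
    (hb1 : RegularAt b1 v₀) (hb2 : RegularAt b2 v₀)
    (h : quadCCoeff (x v₀) (xa v₀) (xb v₀) (a2 v₀) (b1 v₀) (b2 v₀) ≠ 0) :
    RegularAt (fun v => solveC (x v) (xa v) (xb v) (xc v) (a1 v) (a2 v) (b1 v) (b2 v)) v₀ := by
  unfold solveC quadC
  unfold quadCCoeff at h ⊢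
  fun_prop (disch := exact h)

end RegularAt

lemma AxisNondegenerate.eventually {σ : Type*} {v₀ : σ → K}
    {a1 a2 g1 g2 x y zn zs : (σ → K) → K}
    (ha1 : RegularAt a1 v₀) (ha2 : RegularAt a2 v₀) (hg1 : RegularAt g1 v₀)
    (hg2 : RegularAt g2 v₀) (hx : RegularAt x v₀) (hy : RegularAt y v₀) (hzn : RegularAt zn v₀)
    (hzs : RegularAt zs v₀)
    (h : AxisNondegenerate (a1 v₀) (a2 v₀) (g1 v₀) (g2 v₀) (x v₀) (y v₀) (zn v₀) (zs v₀)) :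
    ∀ᶠ v in zariskiNhds v₀,
      AxisNondegenerate (a1 v) (a2 v) (g1 v) (g2 v) (x v) (y v) (zn v) (zs v) := by
  have edge_xy := (hg1.edgeFactor hg2 hx hy).eventually_ne_zero h.edge_xy
  have edge_xzn := (hg1.edgeFactor ha2 hx hzn).eventually_ne_zero h.edge_xzn
  have edge_yzn := (hg2.edgeFactor ha2 hy hzn).eventually_ne_zero h.edge_yzn
  have leg_zs := (((hzs.mul hx).mul hg1).sub ha1).eventually_ne_zero h.leg_zs
  filter_upwards [hg1.eventually_ne_zero h.g1_ne, hg2.eventually_ne_zero h.g2_ne,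
    hx.eventually_ne_zero h.x_ne, hy.eventually_ne_zero h.y_ne, hzn.eventually_ne_zero h.zn_ne,
    hzs.eventually_ne_zero h.zs_ne, edge_xy, edge_xzn, edge_yzn, leg_zs]
    with v h₁ h₂ h₃ h₄ h₅ h₆ h₇ h₈ h₉ h₁₀ using ⟨h₁, h₂, h₃, h₄, h₅, h₆, h₇, h₈, h₉, h₁₀⟩

lemma SideNondegenerate.eventually {σ : Type*} {v₀ : σ → K} {a2 g1 g2 x y b z : (σ → K) → K}
    (ha2 : RegularAt a2 v₀) (hg1 : RegularAt g1 v₀) (hg2 : RegularAt g2 v₀) (hx : RegularAt x v₀)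
    (hy : RegularAt y v₀) (hb : RegularAt b v₀) (hz : RegularAt z v₀)
    (h : SideNondegenerate (a2 v₀) (g1 v₀) (g2 v₀) (x v₀) (y v₀) (b v₀) (z v₀)) :
    ∀ᶠ v in zariskiNhds v₀, SideNondegenerate (a2 v) (g1 v) (g2 v) (x v) (y v) (b v) (z v) := by
  filter_upwards [hb.eventually_ne_zero h.b_ne, hz.eventually_ne_zero h.z_ne,
    (hb.pow 2).eventually_ne (ha2.pow 2) h.sq_ne_a2,
    (hb.pow 2).eventually_ne (hg1.pow 2) h.sq_ne_g1,
    (hb.pow 2).eventually_ne (hg2.pow 2) h.sq_ne_g2,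
    (hb.edgeFactor hg2 hx hz).eventually_ne_zero h.edge_xz,
    (hb.edgeFactor hg1 hy hz).eventually_ne_zero h.edge_yz]
    with v h₁ h₂ h₃ h₄ h₅ h₆ h₇ using ⟨h₁, h₂, h₃, h₄, h₅, h₆, h₇⟩

/-- The initial data of the face-centered cube: its parameters and the six values from which all
others are determined. -/
structure InitialData (K : Type*) where
  (a1 a2 b1 b2 g1 g2 x xa xb xc zn zw : K)

namespace InitialData

/-- The initial data with the given coordinates. -/
def ofCoords (v : Fin 12 → K) : InitialData K :=
  ⟨v 0, v 1, v 2, v 3, v 4, v 5, v 6, v 7, v 8, v 9, v 10, v 11⟩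

section Solution

variable (d : InitialData K)

/-- The corner `y`, from the type-A equation at `x` in the west half. -/
def y : K := solveA d.x d.xa d.zw d.zn d.g1 d.b1 d.a2 d.g2

/-- The corner `ya`, from the type-A equation at `y` in the west half. -/
def ya : K := solveA d.y d.x d.zn d.zw d.b1 d.g2 d.g1 d.a2

/-- The face centre `ze`, from the type-A equation at `x` in the east half. -/
def ze : K := solveA d.x d.zn d.y d.xb d.b2 d.g1 d.a2 d.g2

/-- The corner `yb`, from the type-A equation at `y` in the east half. -/
def yb : K := solveA d.y d.x d.zn d.ze d.b2 d.g2 d.g1 d.a2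

/-- The face centre `zs`, from the type-C equation at `x` in the west half. -/
def zs : K := solveC d.x d.zw d.y d.xc d.a1 d.g2 d.b1 d.g1

/-- The corner `yc`, from the type-C equation at `y` in the west half. -/
def yc : K := solveC d.y d.x d.zw d.zs d.a1 d.g1 d.g2 d.b1

/-- The corner `xd`, from the type-C equation at `x` in the east half. -/
def xd : K := solveC d.x d.y d.ze d.zs d.a1 d.g2 d.g1 d.b2

/-- The corner `yd`, from the type-C equation at `y` in the east half. -/
def yd : K := solveC d.y d.x d.ze d.zs d.a1 d.g1 d.g2 d.b2

/-- The open condition on the initial data under which all the equations can be solved and the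
solution is consistent. -/
structure Nondegenerate : Prop where
  coeff_y : quadACoeff d.x d.xa d.zw d.zn d.g1 d.b1 d.a2 d.g2 ≠ 0
  coeff_ya : quadACoeff d.y d.x d.zn d.zw d.b1 d.g2 d.g1 d.a2 ≠ 0
  coeff_ze : quadACoeff d.x d.zn d.y d.xb d.b2 d.g1 d.a2 d.g2 ≠ 0
  coeff_yb : quadACoeff d.y d.x d.zn d.ze d.b2 d.g2 d.g1 d.a2 ≠ 0
  axis : AxisNondegenerate d.a1 d.a2 d.g1 d.g2 d.x d.y d.zn d.zs
  west : SideNondegenerate d.a2 d.g1 d.g2 d.x d.y d.b1 d.zw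
  east : SideNondegenerate d.a2 d.g1 d.g2 d.x d.y d.b2 d.ze

end Solution

namespace Nondegenerate

variable {d : InitialData K}

lemma coeff_zs (h : d.Nondegenerate) : quadCCoeff d.x d.zw d.y d.g2 d.b1 d.g1 ≠ 0 :=
  mul_ne_zero (mul_ne_zero (mul_ne_zero h.west.b_ne h.axis.g1_ne)
    (left_ne_zero_of_mul h.west.edge_xz)) (right_ne_zero_of_mul h.axis.edge_xy)

theorem west_halfCube (h : d.Nondegenerate) :
    HalfCube d.a1 d.a2 d.g1 d.g2 d.x d.y d.zn d.zs d.b1 d.zw d.xa d.ya d.xc d.yc := by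
  have hy : quadCCoeff d.y d.x d.zw d.g1 d.g2 d.b1 ≠ 0 :=
    mul_ne_zero (mul_ne_zero (mul_ne_zero h.axis.g2_ne h.west.b_ne)
      (right_ne_zero_of_mul (edgeFactor_symm d.g1 d.g2 d.x d.y ▸ h.axis.edge_xy)))
      (right_ne_zero_of_mul h.west.edge_yz)
  refine .of_x_of_y h.axis h.west ?_ (quadA_solveA h.coeff_ya) ?_ (quadC_solveC hy)
  · rw [← quadA_rotate, ← quadA_rotate]
    exact quadA_solveA h.coeff_y
  · rw [← neg_eq_zero, ← quadC_swap]
    exact quadC_solveC h.coeff_zs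

theorem east_halfCube (h : d.Nondegenerate) :
    HalfCube d.a1 d.a2 d.g1 d.g2 d.x d.y d.zn d.zs d.b2 d.ze d.xb d.yb d.xd d.yd := by
  have hx : quadCCoeff d.x d.y d.ze d.g2 d.g1 d.b2 ≠ 0 :=
    mul_ne_zero (mul_ne_zero (mul_ne_zero h.axis.g1_ne h.east.b_ne)
      (left_ne_zero_of_mul h.axis.edge_xy)) (right_ne_zero_of_mul h.east.edge_xz)
  have hy : quadCCoeff d.y d.x d.ze d.g1 d.g2 d.b2 ≠ 0 :=
    mul_ne_zero (mul_ne_zero (mul_ne_zero h.axis.g2_ne h.east.b_ne)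
      (right_ne_zero_of_mul (edgeFactor_symm d.g1 d.g2 d.x d.y ▸ h.axis.edge_xy)))
      (right_ne_zero_of_mul h.east.edge_yz)
  refine .of_x_of_y h.axis h.east ?_ (quadA_solveA h.coeff_yb) (quadC_solveC hx) (quadC_solveC hy)
  rw [← neg_eq_zero, ← quadA_swap]
  exact quadA_solveA h.coeff_ze

end Nondegenerate

theorem eventually_nondegenerate {v₀ : Fin 12 → K} (h : (ofCoords v₀).Nondegenerate) :
    ∀ᶠ v in zariskiNhds v₀, (ofCoords v).Nondegenerate := by
  have ha1 : RegularAt (fun v => (ofCoords v).a1) v₀ := .apply 0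
  have ha2 : RegularAt (fun v => (ofCoords v).a2) v₀ := .apply 1
  have hb1 : RegularAt (fun v => (ofCoords v).b1) v₀ := .apply 2
  have hb2 : RegularAt (fun v => (ofCoords v).b2) v₀ := .apply 3
  have hg1 : RegularAt (fun v => (ofCoords v).g1) v₀ := .apply 4
  have hg2 : RegularAt (fun v => (ofCoords v).g2) v₀ := .apply 5
  have hx : RegularAt (fun v => (ofCoords v).x) v₀ := .apply 6
  have hxa : RegularAt (fun v => (ofCoords v).xa) v₀ := .apply 7
  have hxb : RegularAt (fun v => (ofCoords v).xb) v₀ := .apply 8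
  have hxc : RegularAt (fun v => (ofCoords v).xc) v₀ := .apply 9
  have hzn : RegularAt (fun v => (ofCoords v).zn) v₀ := .apply 10
  have hzw : RegularAt (fun v => (ofCoords v).zw) v₀ := .apply 11
  have hy : RegularAt (fun v => (ofCoords v).y) v₀ :=
    hx.solveA hxa hzw hzn hg1 hb1 ha2 hg2 h.coeff_y
  have hze : RegularAt (fun v => (ofCoords v).ze) v₀ :=
    hx.solveA hzn hy hxb hb2 hg1 ha2 hg2 h.coeff_ze
  have hzs : RegularAt (fun v => (ofCoords v).zs) v₀ :=
    hx.solveC hzw hy hxc ha1 hg2 hb1 hg1 h.coeff_zs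
  filter_upwards [(hx.quadACoeff hxa hzw hzn hg1 hb1 ha2 hg2).eventually_ne_zero h.coeff_y,
    (hy.quadACoeff hx hzn hzw hb1 hg2 hg1 ha2).eventually_ne_zero h.coeff_ya,
    (hx.quadACoeff hzn hy hxb hb2 hg1 ha2 hg2).eventually_ne_zero h.coeff_ze,
    (hy.quadACoeff hx hzn hze hb2 hg2 hg1 ha2).eventually_ne_zero h.coeff_yb,
    AxisNondegenerate.eventually ha1 ha2 hg1 hg2 hx hy hzn hzs h.axis,
    SideNondegenerate.eventually ha2 hg1 hg2 hx hy hb1 hzw h.west,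
    SideNondegenerate.eventually ha2 hg1 hg2 hx hy hb2 hze h.east]
    with v h₁ h₂ h₃ h₄ h₅ h₆ h₇ using ⟨h₁, h₂, h₃, h₄, h₅, h₆, h₇⟩

theorem exists_nondegenerate [CharZero K] : ∃ v : Fin 12 → K, (ofCoords v).Nondegenerate := by
  -- Found by a search for small data with integral `y`, `ze` and `zs`.
  let d : InitialData K := ⟨-2, -1, 2, 2, -1, 3, 1, 1, 0, 0, 3, -1⟩
  have hy : d.y = 1 := by norm_num [y, solveA, quadA, quadACoeff, d]
  have hze : d.ze = 4 := by norm_num [ze, hy, solveA, quadA, quadACoeff, d]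
  have hzs : d.zs = 1 := by norm_num [zs, hy, solveC, quadC, quadCCoeff, d]
  have hd : d.Nondegenerate := by
    constructor
    case axis => constructor <;> norm_num [hy, hzs, edgeFactor, d]
    case west => constructor <;> norm_num [hy, edgeFactor, d]
    case east => constructor <;> norm_num [hy, hze, edgeFactor, d]
    all_goals norm_num [hy, hze, quadACoeff, d]
  exact ⟨![-2, -1, 2, 2, -1, 3, 1, 1, 0, 0, 3, -1], hd⟩

end InitialData

end Field

lemma A3_zero_eq_zero {x xa xb xc xd a1 a2 b1 b2 : ℂ} (ha1 : a1 ≠ 0) (ha2 : a2 ≠ 0) (hb1 : b1 ≠ 0)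
    (hb2 : b2 ≠ 0) (h : quadA x xa xb xc xd a1 a2 b1 b2 = 0) :
    A3 0 x xa xb xc xd a1 a2 b1 b2 = 0 := by
  have hA : A3 0 x xa xb xc xd a1 a2 b1 b2
      = quadA x xa xb xc xd a1 a2 b1 b2 / (a1 * a2 * b1 * b2) := by
    unfold A3 quadA
    field_simp
    ring
  rw [hA, h, zero_div]

lemma C3_one_zero_zero_eq_zero {x xa xb xc xd a1 a2 b1 b2 : ℂ} (hb1 : b1 ≠ 0) (hb2 : b2 ≠ 0)
    (h : quadC x xa xb xc xd a1 a2 b1 b2 = 0) : C3 1 0 0 x xa xb xc xd a1 a2 b1 b2 = 0 := by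
  have hC : C3 1 0 0 x xa xb xc xd a1 a2 b1 b2
      = quadC x xa xb xc xd a1 a2 b1 b2 / (b1 * b2) := by
    unfold C3 quadC
    simp only [zero_mul, zero_div, sub_zero, add_zero, one_mul]
    field_simp
  rw [hC, h, zero_div]

theorem statement11 :
    ∃ p : MvPolynomial (Fin 12) ℂ, p ≠ 0 ∧
    ∀ a1 a2 b1 b2 g1 g2 x xa xb xc zn zw : ℂ,
      a1 ≠ 0 → a2 ≠ 0 → b1 ≠ 0 → b2 ≠ 0 → g1 ≠ 0 → g2 ≠ 0 →
      MvPolynomial.eval (![a1, a2, b1, b2, g1, g2, x, xa, xb, xc, zn, zw]) p ≠ 0 →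
      ∃ xd y ya yb yc yd ze zs : ℂ,
        C3 1 0 0 x xa xb xc xd a1 a2 b1 b2 = 0 ∧
        C3 1 0 0 zw ya xa yc xc a1 a2 g1 g2 = 0 ∧
        A3 0 zn ya yb xa xb g1 g2 b1 b2 = 0 ∧
        C3 1 0 0 y ya yb yc yd a1 a2 b1 b2 = 0 ∧
        C3 1 0 0 ze yb xb yd xd a1 a2 g1 g2 = 0 ∧
        A3 0 zs yc yd xc xd g1 g2 b1 b2 = 0 ∧
        A3 0 xa zw ya x zn b1 g2 a2 g1 = 0 ∧
        A3 0 xb ze yb x zn b2 g2 a2 g1 = 0 ∧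
        C3 1 0 0 xc zs yc x zw a1 g1 b1 g2 = 0 ∧
        C3 1 0 0 xd yd zs ze x a1 g1 g2 b2 = 0 ∧
        A3 0 ya zw xa y zn b1 g1 a2 g2 = 0 ∧
        A3 0 yb ze xb y zn b2 g1 a2 g2 = 0 ∧
        C3 1 0 0 yc xc zs zw y a1 g2 g1 b1 = 0 ∧
        C3 1 0 0 yd xd zs ze y a1 g2 g1 b2 = 0 := by
  obtain ⟨v₀, hv₀⟩ := InitialData.exists_nondegenerate (K := ℂ)
  obtain ⟨p, hp₀, hp⟩ := eventually_zariskiNhds.mp (InitialData.eventually_nondegenerate hv₀)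
  refine ⟨p, fun h => hp₀ (by rw [h, map_zero]), ?_⟩
  intro a1 a2 b1 b2 g1 g2 x xa xb xc zn zw _ ha2 hb1 hb2 hg1 hg2 hv
  have d := hp _ hv
  have west := d.west_halfCube
  have east := d.east_halfCube
  refine ⟨_, _, _, _, _, _, _, _,
    C3_one_zero_zero_eq_zero hb1 hb2 (west.quadC_x d.axis d.west d.east east),
    C3_one_zero_zero_eq_zero hg1 hg2 (west.quadC_z d.west),
    A3_zero_eq_zero hg1 hg2 hb1 hb2 (west.quadA_zn d.axis east),
    C3_one_zero_zero_eq_zero hb1 hb2 (west.quadC_y d.axis d.west d.east east),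
    C3_one_zero_zero_eq_zero hg1 hg2 (east.quadC_z d.east),
    A3_zero_eq_zero hg1 hg2 hb1 hb2 (west.quadA_zs d.axis east),
    A3_zero_eq_zero hb1 hg2 ha2 hg1 west.quadA_xa,
    A3_zero_eq_zero hb2 hg2 ha2 hg1 east.quadA_xa,
    C3_one_zero_zero_eq_zero hb1 hg2 west.quadC_xc_swap,
    C3_one_zero_zero_eq_zero hg2 hb2 east.quadC_xc,
    A3_zero_eq_zero hb1 hg1 ha2 hg2 west.quadA_ya,
    A3_zero_eq_zero hb2 hg1 ha2 hg2 east.quadA_ya,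
    C3_one_zero_zero_eq_zero hg1 hb1 west.quadC_yc,
    C3_one_zero_zero_eq_zero hg1 hb2 east.quadC_yc⟩
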